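/- arXiv:1003.2584 — 6 statements merged into one kernel-verified Lean document; each statement's English description precedes it below -/
import Mathlib

section
/- A countable discrete group G is amenable if and only if there exists a nonzero continuous linear functional φ on ℓ∞(G) that is invariant under the left-translation action of G (i.e. φ(g·f) = φ(f) for all g ∈ G and f ∈ ℓ∞(G)). (This expresses the non-vanishing of H⁰_b(G, ℓ∞(G)*) as a characterisation of amenability.) -/
noncomputable section
open scoped ENNReal

/-- `ℓ∞(G)`: the Banach space of bounded real-valued functions on `G` with the sup norm. -/
abbrev Linf (G : Type*) : Type _ := ↥(lp (fun _ : G => ℝ) ∞)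

/-- The left-translation action of `G` on `ℓ∞(G)`: `(g · f)(h) = f (g⁻¹ h)`. -/
def ltrans {G : Type*} [Group G] (g : G) (f : Linf G) : Linf G :=
  ⟨fun h => f (g⁻¹ * h),
    memℓp_infty ⟨‖f‖, by
      rintro x ⟨h, rfl⟩
      exact lp.norm_apply_le_norm ENNReal.top_ne_zero f (g⁻¹ * h)⟩⟩

/-- The constant function `1` as an element of `ℓ∞(G)`. -/
def lone (G : Type*) : Linf G :=
  ⟨fun _ => 1, memℓp_infty ⟨1, by rintro x ⟨h, rfl⟩; simp⟩⟩

theorem lone_apply {G : Type*} (h : G) : lone G h = 1 := rfl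

theorem ltrans_apply {G : Type*} [Group G] (g : G) (f : Linf G) (h : G) :
    ltrans g f h = f (g⁻¹ * h) := rfl

theorem linf_abs_le {G : Type*} (f : Linf G) (h : G) : |f h| ≤ ‖f‖ :=
  lp.norm_apply_le_norm ENNReal.top_ne_zero f h

theorem linf_norm_le {G : Type*} (f : Linf G) (C : ℝ) (hC : 0 ≤ C) (hf : ∀ h, |f h| ≤ C) :
    ‖f‖ ≤ C :=
  lp.norm_le_of_forall_le hC hf

/-- The pointwise minimum. -/
def linfMin {G : Type*} (f g : Linf G) : Linf G :=
  ⟨fun h => min (f h) (g h), memℓp_infty ⟨max ‖f‖ ‖g‖, by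
    rintro x ⟨h, rfl⟩
    exact abs_min_le_max_abs_abs.trans (max_le_max (linf_abs_le f h) (linf_abs_le g h))⟩⟩

theorem linfMin_apply {G : Type*} (f g : Linf G) (h : G) :
    linfMin f g h = min (f h) (g h) := rfl

theorem linf_add_apply {G : Type*} (f g : Linf G) (h : G) : (f + g) h = f h + g h := rfl
theorem linf_sub_apply {G : Type*} (f g : Linf G) (h : G) : (f - g) h = f h - g h := rfl
theorem linf_smul_apply {G : Type*} (c : ℝ) (g : Linf G) (h : G) : (c • g) h = c * g h := rfl
theorem linf_zero_apply {G : Type*} (h : G) : (0 : Linf G) h = 0 := rfl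

/-- Values of `φ` on the order interval `[0, f]`. -/
def posSet {G : Type*} (φ : Linf G →L[ℝ] ℝ) (f : Linf G) : Set ℝ :=
  {x | ∃ u : Linf G, (∀ h, 0 ≤ u h) ∧ (∀ h, u h ≤ f h) ∧ φ u = x}

/-- The positive part of `φ` on nonnegative functions. -/
def posP {G : Type*} (φ : Linf G →L[ℝ] ℝ) (f : Linf G) : ℝ := sSup (posSet φ f)

theorem posSet_le {G : Type*} (φ : Linf G →L[ℝ] ℝ) (f : Linf G) :
    ∀ x ∈ posSet φ f, x ≤ ‖φ‖ * ‖f‖ := by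
  rintro x ⟨u, h0, h1, rfl⟩
  refine (le_abs_self _).trans ((φ.le_opNorm u).trans ?_)
  refine mul_le_mul_of_nonneg_left ?_ (norm_nonneg _)
  refine linf_norm_le _ _ (norm_nonneg _) fun h => ?_
  rw [abs_of_nonneg (h0 h)]
  exact (h1 h).trans ((le_abs_self _).trans (linf_abs_le f h))

theorem le_posP {G : Type*} (φ : Linf G →L[ℝ] ℝ) (f u : Linf G) (h0 : ∀ h, 0 ≤ u h)
    (h1 : ∀ h, u h ≤ f h) : φ u ≤ posP φ f :=
  le_csSup ⟨_, posSet_le φ f⟩ ⟨u, h0, h1, rfl⟩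

theorem posP_le {G : Type*} (φ : Linf G →L[ℝ] ℝ) (f : Linf G) (hf : ∀ h, 0 ≤ f h) (C : ℝ)
    (H : ∀ u : Linf G, (∀ h, 0 ≤ u h) → (∀ h, u h ≤ f h) → φ u ≤ C) : posP φ f ≤ C := by
  refine csSup_le ⟨_, f, hf, fun _ => le_rfl, rfl⟩ ?_
  rintro x ⟨u, h0, h1, rfl⟩
  exact H u h0 h1

theorem posP_nonneg {G : Type*} (φ : Linf G →L[ℝ] ℝ) (f : Linf G) (hf : ∀ h, 0 ≤ f h) :
    0 ≤ posP φ f := by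
  have := le_posP φ f 0 (fun h => le_rfl) hf
  simpa using this

theorem posP_le_norm {G : Type*} (φ : Linf G →L[ℝ] ℝ) (f : Linf G) (hf : ∀ h, 0 ≤ f h) :
    posP φ f ≤ ‖φ‖ * ‖f‖ :=
  csSup_le ⟨_, f, hf, fun _ => le_rfl, rfl⟩ (posSet_le φ f)

theorem posP_add {G : Type*} (φ : Linf G →L[ℝ] ℝ) (f g : Linf G) (hf : ∀ h, 0 ≤ f h)
    (hg : ∀ h, 0 ≤ g h) : posP φ (f + g) = posP φ f + posP φ g := by
  apply le_antisymm
  · refine posP_le φ _ (fun h => add_nonneg (hf h) (hg h)) _ fun u h0 h1 => ?_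
    have e : φ u = φ (linfMin u f) + φ (u - linfMin u f) := by rw [← map_add]; simp
    rw [e]
    refine add_le_add (le_posP φ f _ (fun h => le_min (h0 h) (hf h)) fun h => min_le_right _ _)
      (le_posP φ g _ (fun h => ?_) fun h => ?_)
    · rw [linf_sub_apply, linfMin_apply]
      exact sub_nonneg.2 (min_le_left _ _)
    · have h1' := h1 h
      have := hg h
      rw [linf_add_apply] at h1'
      rw [linf_sub_apply, linfMin_apply]
      rcases min_choice (u h) (f h) with e | e <;> rw [e] <;> linarith
  · have key : posP φ f ≤ posP φ (f + g) - posP φ g := by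
      refine posP_le φ f hf _ fun u h0 h1 => ?_
      have : posP φ g ≤ posP φ (f + g) - φ u := by
        refine posP_le φ g hg _ fun v k0 k1 => ?_
        have := le_posP φ (f + g) (u + v) (fun h => add_nonneg (h0 h) (k0 h))
          (fun h => add_le_add (h1 h) (k1 h))
        rw [map_add] at this
        linarith
      linarith
    linarith

theorem ltrans_inv_ltrans {G : Type*} [Group G] (g : G) (f : Linf G) :
    ltrans g⁻¹ (ltrans g f) = f := by
  ext h
  simp [ltrans_apply]

theorem posP_ltrans_le {G : Type*} [Group G] (φ : Linf G →L[ℝ] ℝ)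
    (hφ : ∀ (g : G) (f : Linf G), φ (ltrans g f) = φ f) (g : G) (f : Linf G)
    (hf : ∀ h, 0 ≤ f h) : posP φ f ≤ posP φ (ltrans g f) := by
  refine posP_le φ f hf _ fun u h0 h1 => ?_
  rw [← hφ g u]
  exact le_posP φ _ _ (fun h => h0 _) fun h => h1 _

theorem posP_ltrans {G : Type*} [Group G] (φ : Linf G →L[ℝ] ℝ)
    (hφ : ∀ (g : G) (f : Linf G), φ (ltrans g f) = φ f) (g : G) (f : Linf G)
    (hf : ∀ h, 0 ≤ f h) : posP φ (ltrans g f) = posP φ f := by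
  refine le_antisymm ?_ (posP_ltrans_le φ hφ g f hf)
  have := posP_ltrans_le φ hφ g⁻¹ (ltrans g f) fun h => hf _
  rwa [ltrans_inv_ltrans] at this

theorem shift_nonneg {G : Type*} (f : Linf G) (h : G) : 0 ≤ (f + ‖f‖ • lone G) h := by
  rw [linf_add_apply, linf_smul_apply, lone_apply]
  have := neg_le_of_abs_le (linf_abs_le f h)
  linarith

theorem const_nonneg {G : Type*} (f : Linf G) (h : G) : 0 ≤ (‖f‖ • lone G) h := by
  rw [linf_smul_apply, lone_apply]
  simp

/-- The positive part on all of `ℓ∞`. -/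
def posM {G : Type*} (φ : Linf G →L[ℝ] ℝ) (f : Linf G) : ℝ :=
  posP φ (f + ‖f‖ • lone G) - posP φ (‖f‖ • lone G)

theorem posM_eq {G : Type*} (φ : Linf G →L[ℝ] ℝ) (f a b : Linf G) (ha : ∀ h, 0 ≤ a h)
    (hb : ∀ h, 0 ≤ b h) (e : f = a - b) : posM φ f = posP φ a - posP φ b := by
  have h1 := posP_add φ (f + ‖f‖ • lone G) b (shift_nonneg f) hb
  have h2 := posP_add φ a (‖f‖ • lone G) ha (const_nonneg f)
  have h3 : f + ‖f‖ • lone G + b = a + ‖f‖ • lone G := by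
    generalize ‖f‖ • lone G = c
    rw [e]; abel
  rw [h3] at h1
  unfold posM
  linarith

theorem posM_add {G : Type*} (φ : Linf G →L[ℝ] ℝ) (f g : Linf G) :
    posM φ (f + g) = posM φ f + posM φ g := by
  rw [posM_eq φ (f + g) ((f + ‖f‖ • lone G) + (g + ‖g‖ • lone G))
    (‖f‖ • lone G + ‖g‖ • lone G)
    (fun h => add_nonneg (shift_nonneg f h) (shift_nonneg g h))
    (fun h => add_nonneg (const_nonneg f h) (const_nonneg g h)) (by abel),
    posP_add _ _ _ (shift_nonneg f) (shift_nonneg g),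
    posP_add _ _ _ (const_nonneg f) (const_nonneg g)]
  unfold posM
  ring

theorem posM_of_nonneg {G : Type*} (φ : Linf G →L[ℝ] ℝ) (f : Linf G) (hf : ∀ h, 0 ≤ f h) :
    posM φ f = posP φ f := by
  have h0 := posP_add φ 0 0 (fun h => le_rfl) (fun h => le_rfl)
  rw [add_zero] at h0
  rw [posM_eq φ f f 0 hf (fun h => le_rfl) (by simp)]
  linarith

theorem norm_lone_le (G : Type*) : ‖lone G‖ ≤ 1 :=
  linf_norm_le _ _ zero_le_one fun h => by rw [lone_apply]; simp

theorem posM_bound {G : Type*} (φ : Linf G →L[ℝ] ℝ) (f : Linf G) :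
    ‖posM φ f‖ ≤ (‖φ‖ * 2) * ‖f‖ := by
  have a1 := posP_nonneg φ _ (shift_nonneg f)
  have a2 := posP_nonneg φ _ (const_nonneg f)
  have b1 := posP_le_norm φ _ (shift_nonneg f)
  have b2 := posP_le_norm φ _ (const_nonneg f)
  have c2 : ‖‖f‖ • lone G‖ ≤ ‖f‖ := by
    rw [norm_smul, norm_norm]
    exact mul_le_of_le_one_right (norm_nonneg _) (norm_lone_le G)
  have c1 : ‖f + ‖f‖ • lone G‖ ≤ 2 * ‖f‖ := by
    have := norm_add_le f (‖f‖ • lone G)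
    linarith
  have d1 := mul_le_mul_of_nonneg_left c1 (norm_nonneg φ)
  have d2 := mul_le_mul_of_nonneg_left c2 (norm_nonneg φ)
  have d3 := mul_nonneg (norm_nonneg φ) (norm_nonneg f)
  rw [Real.norm_eq_abs, abs_le]
  unfold posM
  constructor <;> linarith

/-- The positive part as a continuous linear functional. -/
def posL {G : Type*} (φ : Linf G →L[ℝ] ℝ) : Linf G →L[ℝ] ℝ :=
  (AddMonoidHom.mk' (posM φ) (posM_add φ)).toRealLinearMap
    (AddMonoidHomClass.continuous_of_bound _ (‖φ‖ * 2) (posM_bound φ))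

theorem posL_apply {G : Type*} (φ : Linf G →L[ℝ] ℝ) (f : Linf G) : posL φ f = posM φ f := rfl

theorem posL_nonneg {G : Type*} (φ : Linf G →L[ℝ] ℝ) (f : Linf G) (hf : ∀ h, 0 ≤ f h) :
    0 ≤ posL φ f := by
  rw [posL_apply, posM_of_nonneg φ f hf]
  exact posP_nonneg φ f hf

theorem posL_ltrans {G : Type*} [Group G] (φ : Linf G →L[ℝ] ℝ)
    (hφ : ∀ (g : G) (f : Linf G), φ (ltrans g f) = φ f) (g : G) (f : Linf G) :
    posL φ (ltrans g f) = posL φ f := by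
  rw [posL_apply, posL_apply, posM_eq φ (ltrans g f) (ltrans g (f + ‖f‖ • lone G))
    (ltrans g (‖f‖ • lone G)) (fun h => shift_nonneg f _) (fun h => const_nonneg f _),
    posP_ltrans φ hφ _ _ (shift_nonneg f), posP_ltrans φ hφ _ _ (const_nonneg f)]
  · rfl
  · ext h
    rw [linf_sub_apply, ltrans_apply, ltrans_apply, ltrans_apply, linf_add_apply]
    ring

theorem exists_mean_of_pos {G : Type*} [Group G] (φ : Linf G →L[ℝ] ℝ)
    (hφ : ∀ (g : G) (f : Linf G), φ (ltrans g f) = φ f)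
    (u : Linf G) (hu : ∀ h, 0 ≤ u h) (hpos : 0 < φ u) :
    ∃ μ : Linf G →L[ℝ] ℝ,
        (∀ f : Linf G, (∀ h : G, 0 ≤ f h) → 0 ≤ μ f) ∧ ‖μ‖ = 1 ∧
        (∀ (g : G) (f : Linf G), μ (ltrans g f) = μ f) := by
  have hne : ‖posL φ‖ ≠ 0 := by
    intro h0
    have hz : posL φ = 0 := norm_eq_zero.1 h0
    have h1 : posL φ u = 0 := by rw [hz]; rfl
    rw [posL_apply, posM_of_nonneg φ u hu] at h1
    have := le_posP φ u u hu fun _ => le_rfl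
    linarith
  refine ⟨‖posL φ‖⁻¹ • posL φ, fun f hf => ?_, ?_, fun g f => ?_⟩
  · exact mul_nonneg (inv_nonneg.2 (norm_nonneg _)) (posL_nonneg φ f hf)
  · rw [norm_smul, norm_inv, norm_norm, inv_mul_cancel₀ hne]
  · change ‖posL φ‖⁻¹ * posL φ _ = ‖posL φ‖⁻¹ * posL φ _
    rw [posL_ltrans φ hφ]

/-- A countable discrete group `G` is amenable (admits a left-invariant mean on `ℓ∞(G)`)
if and only if there exists a nonzero continuous `G`-invariant linear functional on `ℓ∞(G)`. -/
theorem amenable_iff_exists_nonzero_invariant_functional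
    (G : Type*) [Group G] [Countable G] :
    (∃ μ : Linf G →L[ℝ] ℝ,
        (∀ f : Linf G, (∀ h : G, 0 ≤ f h) → 0 ≤ μ f) ∧ ‖μ‖ = 1 ∧
        (∀ (g : G) (f : Linf G), μ (ltrans g f) = μ f)) ↔
      (∃ φ : Linf G →L[ℝ] ℝ, φ ≠ 0 ∧
        (∀ (g : G) (f : Linf G), φ (ltrans g f) = φ f)) := by
  constructor
  · rintro ⟨μ, -, h1, h2⟩
    refine ⟨μ, ?_, h2⟩
    rintro rfl
    simp at h1
  · rintro ⟨φ, hne, hφ⟩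
    have key : ∃ u : Linf G, (∀ h, 0 ≤ u h) ∧ φ u ≠ 0 := by
      by_contra! H
      apply hne
      ext f
      have a := H _ (shift_nonneg f)
      rw [map_add, H _ (const_nonneg f), add_zero] at a
      exact a
    obtain ⟨u, hu, hu0⟩ := key
    rcases lt_or_gt_of_ne hu0 with hlt | hgt
    · refine exists_mean_of_pos (-φ) (fun g f => ?_) u hu (neg_pos.2 hlt)
      exact congrArg Neg.neg (hφ g f)
    · exact exists_mean_of_pos φ hφ u hu hgt
end
end

section
/- A countable discrete group G is amenable if and only if the constant function 1 does not lie in the linear span of the set {g·f − f : g ∈ G, f ∈ ℓ∞(G)} inside ℓ∞(G). (This is the non-vanishing of the Block–Weinberger fundamental class ι[1] in H₀(G, ℓ∞(G)).) -/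
noncomputable section
open scoped ENNReal

/-- The `ℓ¹` norm of a finitely supported function. -/
def nrm {α : Type*} (θ : α →₀ ℝ) : ℝ := θ.sum (fun _ a => |a|)

theorem nrm_eq {α : Type*} (θ : α →₀ ℝ) (s : Finset α) (h : θ.support ⊆ s) :
    nrm θ = ∑ x ∈ s, |θ x| :=
  Finsupp.sum_of_support_subset θ h _ (by simp)

theorem nrm_add {α : Type*} (a b : α →₀ ℝ) : nrm (a + b) ≤ nrm a + nrm b := by
  classical
  rw [nrm_eq (a + b) (a.support ∪ b.support) Finsupp.support_add,
    nrm_eq a (a.support ∪ b.support) Finset.subset_union_left,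
    nrm_eq b (a.support ∪ b.support) Finset.subset_union_right, ← Finset.sum_add_distrib]
  exact Finset.sum_le_sum fun x _ => abs_add_le _ _

theorem nrm_smul {α : Type*} (c : ℝ) (hc : 0 < c) (a : α →₀ ℝ) : nrm (c • a) = c * nrm a := by
  rw [nrm_eq (c • a) a.support Finsupp.support_smul, nrm_eq a a.support subset_rfl,
    Finset.mul_sum]
  exact Finset.sum_congr rfl fun x _ => by simp [abs_mul, abs_of_pos hc]

theorem nrm_mono {α : Type*} (a b : α →₀ ℝ) (h : ∀ x, |a x| ≤ |b x|) : nrm a ≤ nrm b := by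
  rw [nrm_eq a b.support, nrm_eq b b.support subset_rfl]
  · exact Finset.sum_le_sum fun x _ => h x
  · intro x hx
    rw [Finsupp.mem_support_iff] at hx ⊢
    intro hb
    have := h x
    rw [hb, abs_zero] at this
    exact hx (abs_nonpos_iff.mp this)

/-- The coboundary operator on finitely supported functions. -/
def dd {G ι : Type*} [Group G] [Fintype ι] (g : ι → G) : (G →₀ ℝ) →ₗ[ℝ] (ι × G →₀ ℝ) :=
  Finsupp.linearCombination ℝ (fun x => ∑ i,
    (Finsupp.single (i, (g i)⁻¹ * x) (1 : ℝ) - Finsupp.single (i, x) 1))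

theorem dd_apply {G ι : Type*} [Group G] [Fintype ι] (g : ι → G) (φ : G →₀ ℝ) (i : ι) (y : G) :
    dd g φ (i, y) = φ (g i * y) - φ y := by
  classical
  induction φ using Finsupp.induction_linear with
  | zero => simp
  | add a b ha hb => rw [map_add, Finsupp.add_apply, ha, hb]; simp; ring
  | single x a =>
    simp only [dd, Finsupp.linearCombination_single, Finsupp.smul_apply, Finsupp.finsetSum_apply,
      Finsupp.sub_apply, Finsupp.single_apply, Prod.mk.injEq, smul_eq_mul]
    rw [Finset.sum_eq_single i]
    · simp only [true_and, inv_mul_eq_iff_eq_mul]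
      split_ifs <;> simp
    · intro b _ hb
      simp [hb]
    · simp

theorem main_ineq {G ι : Type*} [Group G] [Fintype ι] (g : ι → G) (f : ι → G → ℝ) (C : ℝ)
    (hC : ∀ i x, |f i x| ≤ C) (h1 : ∀ x, 1 ≤ ∑ i, (f i ((g i)⁻¹ * x) - f i x))
    (φ : G →₀ ℝ) : nrm φ ≤ C * nrm (dd g φ) := by
  set ψ : G →₀ ℝ := φ.mapRange (fun a => |a|) abs_zero with hψ
  have hψa : ∀ x, ψ x = |φ x| := fun x => by simp [hψ]
  set L : (ι × G →₀ ℝ) →ₗ[ℝ] ℝ := Finsupp.linearCombination ℝ (fun p => f p.1 p.2) with hL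
  have hLd : ∀ χ, L (dd g χ) = χ.sum fun x a => a * ∑ i, (f i ((g i)⁻¹ * x) - f i x) := by
    intro χ
    rw [dd, Finsupp.linearCombination_apply ℝ χ, Finsupp.sum, map_sum, Finsupp.sum]
    refine Finset.sum_congr rfl fun x _ => ?_
    simp [hL]
  have hLb : ∀ θ, L θ ≤ C * nrm θ := by
    intro θ
    rw [hL, Finsupp.linearCombination_apply, Finsupp.sum, nrm, Finsupp.sum, Finset.mul_sum]
    refine Finset.sum_le_sum fun p _ => ?_
    calc θ p * f p.1 p.2 ≤ |θ p * f p.1 p.2| := le_abs_self _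
      _ = |f p.1 p.2| * |θ p| := by rw [abs_mul, mul_comm]
      _ ≤ C * |θ p| := mul_le_mul_of_nonneg_right (hC _ _) (abs_nonneg _)
  have h2 : nrm (dd g ψ) ≤ nrm (dd g φ) := by
    apply nrm_mono
    rintro ⟨i, y⟩
    rw [dd_apply, dd_apply, hψa, hψa]
    exact abs_abs_sub_abs_le_abs_sub _ _
  have h3 : nrm φ ≤ L (dd g ψ) := by
    rw [hLd, nrm_eq φ φ.support subset_rfl,
      Finsupp.sum_of_support_subset ψ (s := φ.support) Finsupp.support_mapRange _ (by simp)]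
    refine Finset.sum_le_sum fun x _ => ?_
    rw [hψa]
    exact le_mul_of_one_le_right (abs_nonneg _) (h1 x)
  rcases isEmpty_or_nonempty ι with hι | ⟨⟨i⟩⟩
  · exact absurd (h1 1) (by simp)
  · have hC0 : 0 ≤ C := (abs_nonneg _).trans (hC i 1)
    exact h3.trans ((hLb _).trans (mul_le_mul_of_nonneg_left h2 hC0))

theorem exact_flow {G ι : Type*} [Group G] [Fintype ι] (g : ι → G) (f : ι → G → ℝ) (C : ℝ)
    (hC : ∀ i x, |f i x| ≤ C) (h1 : ∀ x, 1 ≤ ∑ i, (f i ((g i)⁻¹ * x) - f i x)) :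
    ∃ F : ι → G → ℝ, (∀ i x, |F i x| ≤ C) ∧ ∀ x, ∑ i, (F i ((g i)⁻¹ * x) - F i x) = 1 := by
  have hmain := main_ineq g f C hC h1
  have hinj : Function.Injective (dd g) := by
    rw [injective_iff_map_eq_zero]
    intro φ hφ
    have h := hmain φ
    rw [hφ] at h
    have h0 : nrm (0 : ι × G →₀ ℝ) = 0 := by simp [nrm]
    rw [h0, mul_zero] at h
    ext x
    by_contra hx
    have hx' : x ∈ φ.support := Finsupp.mem_support_iff.mpr hx
    have h5 : |φ x| ≤ nrm φ :=
      Finset.single_le_sum (f := fun x => |φ x|) (fun _ _ => abs_nonneg _) hx'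
    exact hx (abs_nonpos_iff.mp (h5.trans h))
  rcases isEmpty_or_nonempty ι with hι | ⟨⟨i0⟩⟩
  · exact absurd (h1 1) (by simp)
  have hC0 : 0 ≤ C := (abs_nonneg _).trans (hC i0 1)
  let tot : (G →₀ ℝ) →ₗ[ℝ] ℝ := Finsupp.linearCombination ℝ (fun _ => (1 : ℝ))
  let e := LinearEquiv.ofInjective (dd g) hinj
  let P : (ι × G →₀ ℝ) →ₗ.[ℝ] ℝ := ⟨LinearMap.range (dd g), tot ∘ₗ e.symm.toLinearMap⟩
  obtain ⟨Λ, hΛ1, hΛ2⟩ := exists_extension_of_le_sublinear P (fun θ => C * nrm θ)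
    (fun c hc x => by simp only [nrm_smul c hc]; ring)
    (fun x y => by
      rw [← mul_add]
      exact mul_le_mul_of_nonneg_left (nrm_add x y) hC0)
    (by
      intro x
      obtain ⟨φ, rfl⟩ := e.surjective x
      have : P (e φ) = tot φ := by
        change tot (e.symm (e φ)) = _
        rw [e.symm_apply_apply]
      rw [this]
      refine le_trans ?_ (hmain φ)
      simp only [tot, Finsupp.linearCombination_apply, nrm]
      exact Finset.sum_le_sum fun x _ => by simpa using le_abs_self (φ x))
  refine ⟨fun i x => Λ (Finsupp.single (i, x) 1), fun i x => ?_, fun x => ?_⟩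
  · rw [abs_le]
    have ha := hΛ2 (Finsupp.single (i, x) 1)
    have hb := hΛ2 (Finsupp.single (i, x) (-1))
    have hs : ∀ a : ℝ, nrm (Finsupp.single (i, x) a) = |a| := fun a => by simp [nrm]
    rw [hs, abs_one, mul_one] at ha
    rw [hs, abs_neg, abs_one, mul_one, Finsupp.single_neg, map_neg] at hb
    exact ⟨by dsimp only; linarith, ha⟩
  · have := hΛ1 (e (Finsupp.single x 1))
    have h6 : P (e (Finsupp.single x 1)) = 1 := by
      change tot (e.symm (e (Finsupp.single x 1))) = _
      rw [e.symm_apply_apply]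
      simp [tot]
    have h7 : ((e (Finsupp.single x 1) : LinearMap.range (dd g)) : ι × G →₀ ℝ)
        = dd g (Finsupp.single x 1) := rfl
    refine Eq.trans ?_ (this.trans h6)
    refine Eq.trans ?_ (congrArg Λ h7.symm)
    simp [dd]

theorem coord_le {G : Type*} (f : Linf G) (x : G) : |f x| ≤ ‖f‖ :=
  lp.norm_apply_le_norm ENNReal.top_ne_zero f x

theorem one_mem_of_ge {G : Type*} [Group G] (h : Linf G)
    (hh : h ∈ Submodule.span ℝ {x : Linf G | ∃ (g : G) (f : Linf G), x = ltrans g f - f})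
    (ε : ℝ) (hε : 0 < ε) (h1 : ∀ x, ε ≤ h x) :
    lone G ∈ Submodule.span ℝ {x : Linf G | ∃ (g : G) (f : Linf G), x = ltrans g f - f} := by
  obtain ⟨n, c, v, rfl⟩ := Submodule.mem_span_set'.mp hh
  choose g f hgf using fun i => (v i).2
  obtain ⟨F, hF1, hF2⟩ := exact_flow g (fun i x => ε⁻¹ * (c i * f i x))
    (∑ i, ε⁻¹ * (|c i| * ‖f i‖))
    (fun i x => by
      rw [abs_mul, abs_mul, abs_of_pos (inv_pos.mpr hε)]
      refine le_trans ?_ (Finset.single_le_sum (f := fun i => ε⁻¹ * (|c i| * ‖f i‖))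
        (fun _ _ => by positivity) (Finset.mem_univ i))
      have := coord_le (f i) x
      dsimp only
      gcongr)
    (fun x => by
      have h2 := h1 x
      have h3 : (∑ i, c i • (v i : Linf G)) x = ∑ i, c i * (f i ((g i)⁻¹ * x) - f i x) := by
        rw [lp.coeFn_sum, Finset.sum_apply]
        refine Finset.sum_congr rfl fun i _ => ?_
        rw [hgf i]
        rfl
      rw [h3] at h2
      have h4 : ∑ i, (ε⁻¹ * (c i * f i ((g i)⁻¹ * x)) - ε⁻¹ * (c i * f i x))
          = ε⁻¹ * ∑ i, c i * (f i ((g i)⁻¹ * x) - f i x) := by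
        rw [Finset.mul_sum]
        exact Finset.sum_congr rfl fun i _ => by ring
      rw [h4, inv_mul_eq_div, le_div_iff₀ hε, one_mul]
      exact h2)
  let F' : Fin n → Linf G := fun i => ⟨F i, memℓp_infty ⟨_, by
    rintro x ⟨y, rfl⟩
    exact hF1 i y⟩⟩
  have : lone G = ∑ i, (ltrans (g i) (F' i) - F' i) := by
    apply lp.ext
    funext x
    rw [lp.coeFn_sum, Finset.sum_apply]
    exact (hF2 x).symm
  rw [this]
  exact Submodule.sum_mem _ fun i _ => Submodule.subset_span ⟨g i, F' i, rfl⟩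

theorem norm_le_of {G : Type*} (f : Linf G) (C : ℝ) (hC : 0 ≤ C) (h : ∀ x, |f x| ≤ C) :
    ‖f‖ ≤ C := lp.norm_le_of_forall_le hC h

theorem one_le_norm_lone_sub {G : Type*} [Group G]
    (hn : lone G ∉ Submodule.span ℝ {x : Linf G | ∃ (g : G) (f : Linf G), x = ltrans g f - f})
    (m : Linf G)
    (hm : m ∈ Submodule.span ℝ {x : Linf G | ∃ (g : G) (f : Linf G), x = ltrans g f - f}) :
    1 ≤ ‖lone G - m‖ := by
  by_contra! hlt
  refine hn (one_mem_of_ge m hm (1 - ‖lone G - m‖) (by linarith) fun x => ?_)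
  have h1 : |1 - m x| ≤ ‖lone G - m‖ := coord_le (lone G - m) x
  linarith [(abs_le.mp h1).2]

/-- A countable discrete group `G` is amenable if and only if the constant function `1`
does not lie in the linear span of `{g·f − f : g ∈ G, f ∈ ℓ∞(G)}` inside `ℓ∞(G)`
(non-vanishing of the Block–Weinberger fundamental class in `H₀(G, ℓ∞(G))`). -/
theorem amenable_iff_one_not_in_span_of_coboundaries
    (G : Type*) [Group G] [Countable G] :
    (∃ μ : Linf G →L[ℝ] ℝ,
        (∀ f : Linf G, (∀ h : G, 0 ≤ f h) → 0 ≤ μ f) ∧ ‖μ‖ = 1 ∧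
        (∀ (g : G) (f : Linf G), μ (ltrans g f) = μ f)) ↔
      lone G ∉ Submodule.span ℝ
        {x : Linf G | ∃ (g : G) (f : Linf G), x = ltrans g f - f} := by
  constructor
  · rintro ⟨μ, hpos, hnorm, hinv⟩ hmem
    have hker : Submodule.span ℝ {x : Linf G | ∃ (g : G) (f : Linf G), x = ltrans g f - f}
        ≤ LinearMap.ker (μ : Linf G →ₗ[ℝ] ℝ) := by
      rw [Submodule.span_le]
      rintro _ ⟨g, f, rfl⟩
      simp [hinv]
    have h1 : μ (lone G) = 0 := hker hmem
    have h0 : μ = 0 := by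
      ext f
      have ha := hpos (‖f‖ • lone G - f) (fun x => by
        change 0 ≤ ‖f‖ * 1 - f x
        linarith [(abs_le.mp (coord_le f x)).2])
      have hb := hpos (‖f‖ • lone G + f) (fun x => by
        change 0 ≤ ‖f‖ * 1 + f x
        linarith [(abs_le.mp (coord_le f x)).1])
      rw [map_sub, map_smul, h1] at ha
      rw [map_add, map_smul, h1] at hb
      simp at ha hb ⊢
      linarith
    rw [h0] at hnorm
    simp at hnorm
  · intro hn
    have hd := one_le_norm_lone_sub hn
    set M := Submodule.span ℝ {x : Linf G | ∃ (g : G) (f : Linf G), x = ltrans g f - f} with hM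
    let P0 : Linf G →ₗ.[ℝ] ℝ := ⟨M, 0⟩
    let P : Linf G →ₗ.[ℝ] ℝ := P0.supSpanSingleton (lone G) 1 hn
    have hPm : ∀ (m : Linf G) (hm : m ∈ M) (t : ℝ) (hx : m + t • lone G ∈ P.domain),
        P ⟨m + t • lone G, hx⟩ = t := by
      intro m hm t hx
      have := LinearPMap.supSpanSingleton_apply_mk P0 (lone G) 1 hn m hm t
      refine this.trans ?_
      change (0 : ℝ) + t • 1 = t
      simp
    have hdom : ∀ (m : Linf G) (hm : m ∈ M) (t : ℝ), m + t • lone G ∈ P.domain := by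
      intro m hm t
      exact Submodule.add_mem_sup hm (Submodule.smul_mem _ _ (Submodule.mem_span_singleton_self _))
    obtain ⟨Λ, hΛ1, hΛ2⟩ := exists_extension_of_le_sublinear P (fun f => ‖f‖)
      (fun c hc x => by simp [norm_smul, abs_of_pos hc])
      (fun x y => norm_add_le x y)
      (by
        rintro ⟨x, hx⟩
        obtain ⟨m, hm, y, hy, rfl⟩ := Submodule.mem_sup.mp hx
        obtain ⟨t, rfl⟩ := Submodule.mem_span_singleton.mp hy
        rw [hPm m hm t hx]
        rcases le_or_gt t 0 with ht | ht
        · exact ht.trans (norm_nonneg _)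
        · have h1 := hd (-(t⁻¹ • m)) (M.neg_mem (M.smul_mem _ hm))
          have h2 : m + t • lone G = t • (lone G - -(t⁻¹ • m)) := by
            rw [sub_neg_eq_add, smul_add, smul_inv_smul₀ ht.ne', add_comm]
          change t ≤ ‖m + t • lone G‖
          rw [h2, norm_smul, Real.norm_eq_abs, abs_of_pos ht]
          nlinarith)
    have hΛM : ∀ m ∈ M, ∀ t : ℝ, Λ (m + t • lone G) = t := fun m hm t =>
      (hΛ1 ⟨_, hdom m hm t⟩).trans (hPm m hm t _)
    have hΛ1' : Λ (lone G) = 1 := by simpa using hΛM 0 M.zero_mem 1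
    have hΛ0 : ∀ m ∈ M, Λ m = 0 := fun m hm => by simpa using hΛM m hm 0
    have hbd : ∀ f, ‖Λ f‖ ≤ 1 * ‖f‖ := by
      intro f
      have h2 := hΛ2 (-f)
      rw [map_neg, norm_neg] at h2
      rw [one_mul, Real.norm_eq_abs, abs_le]
      exact ⟨by linarith, hΛ2 f⟩
    refine ⟨Λ.mkContinuous 1 hbd, fun f hf => ?_, ?_, fun g f => ?_⟩
    · rw [LinearMap.mkContinuous_apply]
      have h3 : ‖‖f‖ • lone G - f‖ ≤ ‖f‖ := norm_le_of _ _ (norm_nonneg _) fun x => by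
        change |‖f‖ * 1 - f x| ≤ ‖f‖
        have := (abs_le.mp (coord_le f x)).2
        rw [abs_le]
        constructor <;> linarith [hf x]
      have h4 := hΛ2 (‖f‖ • lone G - f)
      rw [map_sub, map_smul, hΛ1', smul_eq_mul, mul_one] at h4
      linarith
    · refine le_antisymm (LinearMap.mkContinuous_norm_le _ zero_le_one _) ?_
      have h5 := (Λ.mkContinuous 1 hbd).le_opNorm (lone G)
      rw [LinearMap.mkContinuous_apply, hΛ1', norm_one] at h5
      have h6 : ‖lone G‖ ≤ 1 := norm_le_of _ _ zero_le_one fun x => by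
        change |(1 : ℝ)| ≤ 1
        simp
      exact h5.trans (mul_le_of_le_one_right (norm_nonneg _) h6)
    · rw [LinearMap.mkContinuous_apply, LinearMap.mkContinuous_apply]
      have := hΛ0 (ltrans g f - f) (Submodule.subset_span ⟨g, f, rfl⟩)
      rw [map_sub] at this
      linarith
end
end

section
/- The free group F₂ on two generators is not amenable: there is no positive linear functional μ on ℓ∞(F₂) with ‖μ‖ = 1 satisfying μ(g·f) = μ(f) for all g ∈ F₂ and f ∈ ℓ∞(F₂). -/
noncomputable section
open scoped ENNReal

/-- The free group on two generators. -/
abbrev F2 : Type := FreeGroup (Fin 2)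

/-- The first generator `a` of `F₂`. -/
def genA : F2 := FreeGroup.of 0

/-- The second generator `b` of `F₂`. -/
def genB : F2 := FreeGroup.of 1

/-- The group element of `F₂` corresponding to a letter: `(i, true) ↦ xᵢ`, `(i, false) ↦ xᵢ⁻¹`.
As `s` ranges over `Fin 2 × Bool`, `el s` ranges over `S = {a, b, a⁻¹, b⁻¹}`. -/
def el (s : Fin 2 × Bool) : F2 := cond s.2 (FreeGroup.of s.1) (FreeGroup.of s.1)⁻¹

/-- The inverse letter: `invL s` is the letter representing `(el s)⁻¹`. -/
def invL (s : Fin 2 × Bool) : Fin 2 × Bool := (s.1, !s.2)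

/-- Indicator of the set of reduced words starting with the letter `w`. -/
def startInd (w : Fin 2 × Bool) : Linf F2 := by
  classical
  exact ⟨fun h => if h ∈ FreeGroup.startsWith w then 1 else 0,
    memℓp_infty ⟨1, by rintro x ⟨h, rfl⟩; dsimp only; split_ifs <;> simp⟩⟩

theorem startInd_of_mem {w : Fin 2 × Bool} {h : F2} (hh : h ∈ FreeGroup.startsWith w) :
    startInd w h = 1 := by
  simp [startInd, hh]

theorem startInd_of_notMem {w : Fin 2 × Bool} {h : F2} (hh : h ∉ FreeGroup.startsWith w) :
    startInd w h = 0 := by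
  simp [startInd, hh]

theorem startInd_nonneg (w : Fin 2 × Bool) (h : F2) : 0 ≤ startInd w h := by
  by_cases hh : h ∈ FreeGroup.startsWith w
  · rw [startInd_of_mem hh]; exact zero_le_one
  · rw [startInd_of_notMem hh]

theorem startInd_cover (w : Fin 2 × Bool) (h : F2) :
    1 ≤ startInd (w.1, !w.2) h + startInd w (FreeGroup.mk [w] * h) := by
  by_cases hh : h ∈ FreeGroup.startsWith (w.1, !w.2)
  · rw [startInd_of_mem hh]
    linarith [startInd_nonneg w (FreeGroup.mk [w] * h)]
  · rw [startInd_of_mem (FreeGroup.startsWith_mk_mul h hh)]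
    linarith [startInd_nonneg (w.1, !w.2) h]

theorem startInd_sum_le (h : F2) :
    startInd (0, true) h + startInd (0, false) h + startInd (1, true) h + startInd (1, false) h
      ≤ 1 := by
  simp only [startInd, FreeGroup.startsWith, Set.mem_ofPred_eq]
  obtain ⟨o, hw⟩ : ∃ o, (FreeGroup.toWord h)[0]? = o := ⟨_, rfl⟩
  simp only [hw]
  rcases o with _ | ⟨i, b⟩
  · simp
  · fin_cases i <;> cases b <;> simp

/-- The free group `F₂` on two generators is not amenable: there is no left-invariant
mean on `ℓ∞(F₂)`. -/
theorem freeGroup_two_not_amenable :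
    ¬ ∃ μ : Linf F2 →L[ℝ] ℝ,
        (∀ f : Linf F2, (∀ h : F2, 0 ≤ f h) → 0 ≤ μ f) ∧ ‖μ‖ = 1 ∧
        (∀ (g : F2) (f : Linf F2), μ (ltrans g f) = μ f) := by
  rintro ⟨μ, hpos, hnorm, hinv⟩
  have lone_apply : ∀ h : F2, lone F2 h = 1 := fun _ => rfl
  have key : ∀ w : Fin 2 × Bool,
      μ (lone F2) ≤ μ (startInd (w.1, !w.2)) + μ (startInd w) := by
    intro w
    have h1 := hpos (startInd (w.1, !w.2) + ltrans (FreeGroup.mk [w])⁻¹ (startInd w) - lone F2) (by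
      intro h
      have h2 := startInd_cover w h
      have h3 : ltrans (FreeGroup.mk [w])⁻¹ (startInd w) h
          = startInd w (FreeGroup.mk [w] * h) := by
        change startInd w ((FreeGroup.mk [w])⁻¹⁻¹ * h) = _
        rw [inv_inv]
      simp only [lp.coeFn_sub, lp.coeFn_add, Pi.sub_apply, Pi.add_apply, h3, lone_apply]
      linarith)
    rw [map_sub, map_add, hinv] at h1
    linarith
  have hle := hpos (lone F2 - (startInd (0, true) + startInd (0, false) + startInd (1, true)
      + startInd (1, false))) (by
    intro h
    have h2 := startInd_sum_le h
    simp only [lp.coeFn_sub, lp.coeFn_add, Pi.sub_apply, Pi.add_apply, lone_apply]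
    linarith)
  simp only [map_sub, map_add] at hle
  have ka := key (0, true)
  have kb := key (1, true)
  simp only [Bool.not_true] at ka kb
  have hone : μ (lone F2) ≤ 0 := by linarith
  have hzero : ∀ f, μ f ≤ 0 := by
    intro f
    have h1 := hpos (‖f‖ • lone F2 - f) (by
      intro h
      have h2 := lp.norm_apply_le_norm ENNReal.top_ne_zero f h
      simp only [lp.coeFn_sub, lp.coeFn_smul, Pi.sub_apply, Pi.smul_apply, lone_apply,
        smul_eq_mul, mul_one]
      linarith [Real.le_norm_self (f h)])
    rw [map_sub, map_smul, smul_eq_mul] at h1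
    nlinarith [norm_nonneg f]
  have : μ = 0 := by
    ext f
    have h1 := hzero f
    have h2 := hzero (-f)
    rw [map_neg] at h2
    simp only [zero_apply]
    linarith
  rw [this, norm_zero] at hnorm
  exact zero_ne_one hnorm
end
end

section
/- For every element g of the free group F₂ on generators a, b, there exist a unique s ∈ S = {a, b, a⁻¹, b⁻¹} and an N such that for all n ≥ N the reduced word representing g·aⁿ is nonempty and has first letter s. (Hence the direction function D : F₂ → S, sending g to this letter s, is well defined; D(g) is the first edge from the identity on the geodesic in the Cayley graph of F₂ towards the boundary point g·p, where p is the endpoint of the ray (aⁿ).) -/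
noncomputable section

/-- Right multiplication by a large power of `a` eventually only appends letters `a`. -/
theorem reduce_append_replicate_stable (L : List (Fin 2 × Bool)) :
    ∃ (w : List (Fin 2 × Bool)) (N : ℕ), ∀ m : ℕ,
      FreeGroup.reduce (L ++ List.replicate (N + m) ((0 : Fin 2), true)) =
        w ++ List.replicate (m + 1) ((0 : Fin 2), true) := by
  induction L with
  | nil =>
    refine ⟨[], 1, fun m => ?_⟩
    rw [List.nil_append, FreeGroup.reduce_replicate, List.nil_append, Nat.add_comm]
  | cons x L ih =>
    obtain ⟨w, N, h⟩ := ih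
    cases w with
    | nil =>
      by_cases hx : x.1 = 0 ∧ x.2 = !true
      · refine ⟨[], N + 1, fun m => ?_⟩
        have h' := h (m + 1)
        rw [show N + (m + 1) = N + 1 + m by omega] at h'
        rw [List.cons_append, FreeGroup.reduce.cons, h']
        simp [List.replicate_succ, hx]
      · refine ⟨[x], N, fun m => ?_⟩
        rw [List.cons_append, FreeGroup.reduce.cons, h m]
        simp only [List.replicate_succ, List.nil_append, if_neg hx, List.cons_append]
    | cons y w =>
      by_cases hx : x.1 = y.1 ∧ x.2 = !y.2
      · refine ⟨w, N, fun m => ?_⟩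
        rw [List.cons_append, FreeGroup.reduce.cons, h m]
        simp only [List.cons_append, if_pos hx]
      · refine ⟨x :: y :: w, N, fun m => ?_⟩
        rw [List.cons_append, FreeGroup.reduce.cons, h m]
        simp only [List.cons_append, if_neg hx]

/-- For every `g ∈ F₂` there is a unique letter `s ∈ S = {a, b, a⁻¹, b⁻¹}` (encoded as
`s : Fin 2 × Bool`) such that for all sufficiently large `n` the reduced word of `g·aⁿ`
is nonempty with first letter `s`.  Hence the direction function `D` is well defined. -/
theorem direction_function_well_defined (g : F2) :
    ∃! s : Fin 2 × Bool, ∃ N : ℕ, ∀ n ≥ N,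
      (FreeGroup.toWord (g * genA ^ n)).head? = some s := by
  obtain ⟨w, N, h⟩ := reduce_append_replicate_stable g.toWord
  have key : ∃ s : Fin 2 × Bool, ∀ n ≥ N,
      (FreeGroup.toWord (g * genA ^ n)).head? = some s := by
    refine ⟨(w.head?).getD (0, true), fun n hn => ?_⟩
    obtain ⟨m, rfl⟩ := Nat.exists_eq_add_of_le hn
    rw [FreeGroup.toWord_mul, genA, FreeGroup.toWord_of_pow, h m]
    cases w <;> simp [List.replicate_succ]
  obtain ⟨s, hs⟩ := key
  refine ⟨s, ⟨N, hs⟩, ?_⟩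
  rintro t ⟨M, ht⟩
  have h1 := hs (max N M) (le_max_left _ _)
  have h2 := ht (max N M) (le_max_right _ _)
  exact Option.some.inj (h2.symm.trans h1)
end
end

section
/- Let D : F₂ → S be the direction function on the free group F₂ on generators a, b. Then for every g ∈ F₂, Σ_{s ∈ S} (𝟙[D(s⁻¹g) = s⁻¹] − 𝟙[D(g) = s]) = 2, where 𝟙[P] equals 1 if P holds and 0 otherwise; equivalently, exactly one s ∈ S satisfies D(g) = s and exactly three s ∈ S satisfy D(s⁻¹g) = s⁻¹. (This is the computation ∂c(e) = 3 − 1 = 2 for the explicit ℓ¹-cycle c built from geodesics towards the boundary point p.) -/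
noncomputable section

theorem el_inv_eq (s : Fin 2 × Bool) : (el s)⁻¹ = FreeGroup.mk [invL s] := by
  obtain ⟨i, b⟩ := s
  cases b <;> simp [el, invL, FreeGroup.of, FreeGroup.inv_mk, FreeGroup.invRev]

theorem head_key (h : F2) (s x y : Fin 2 × Bool) (hx : (FreeGroup.toWord h).head? = some x)
    (hy : (FreeGroup.toWord ((el s)⁻¹ * h)).head? = some y) : y = invL s ↔ x ≠ s := by
  have e : FreeGroup.toWord ((el s)⁻¹ * h) = FreeGroup.reduce (invL s :: FreeGroup.toWord h) := by
    rw [el_inv_eq, ← FreeGroup.toWord_mk]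
    conv_lhs => rw [← FreeGroup.mk_toWord (x := h), FreeGroup.mul_mk]
    rfl
  rw [e, FreeGroup.reduce.cons, FreeGroup.reduce_toWord] at hy
  have hn : ∀ (c : Fin 2) (b : Bool) t, FreeGroup.toWord h ≠ (c, b) :: (c, !b) :: t := by
    intro c b t ht
    refine FreeGroup.reduce.not (L₁ := FreeGroup.toWord h) (L₂ := []) (L₃ := t) (x := c) (b := b) ?_
    rw [FreeGroup.reduce_toWord, ht]; rfl
  generalize FreeGroup.toWord h = w at *
  obtain ⟨i, b⟩ := s
  cases w with
  | nil => simp at hx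
  | cons z t =>
    obtain ⟨j, c⟩ := z
    simp only [List.head?_cons, Option.some.injEq] at hx
    subst hx
    simp only [invL] at hy ⊢
    by_cases hc : i = j ∧ (!b) = !c
    · obtain ⟨rfl, hc⟩ := hc
      have hc : b = c := by simpa using hc
      subst hc
      cases t with
      | nil => simp at hy
      | cons z t =>
        simp only [and_self, if_true, List.head?_cons, Option.some.injEq] at hy
        subst hy
        simp only [ne_eq, not_true_eq_false, iff_false]
        rintro rfl
        exact hn _ _ _ rfl
    · change (if i = j ∧ (!b) = !c then t else (i, !b) :: (j, c) :: t).head? = some y at hy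
      rw [if_neg hc] at hy
      simp only [List.head?_cons, Option.some.injEq] at hy
      subst hy
      simp only [ne_eq, true_iff]
      intro hh
      simp only [Prod.mk.injEq] at hh
      exact hc ⟨hh.1.symm, by simp [hh.2]⟩

/-- For the direction function `D` on `F₂`:
`Σ_{s ∈ S} (𝟙[D(s⁻¹g) = s⁻¹] − 𝟙[D(g) = s]) = 2`; equivalently, exactly one `s ∈ S`
satisfies `D(g) = s` and exactly three satisfy `D(s⁻¹g) = s⁻¹`.
(This is the computation `∂c(e) = 3 − 1 = 2`.) -/
theorem direction_function_boundary_computation (D : F2 → Fin 2 × Bool)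
    (hD : ∀ g : F2, ∃ N : ℕ, ∀ n ≥ N,
      (FreeGroup.toWord (g * genA ^ n)).head? = some (D g)) :
    ∀ g : F2,
      (∑ s : Fin 2 × Bool,
        ((if D ((el s)⁻¹ * g) = invL s then (1 : ℝ) else 0) -
          (if D g = s then (1 : ℝ) else 0))) = 2 ∧
      (Finset.univ.filter fun s : Fin 2 × Bool => D g = s).card = 1 ∧
      (Finset.univ.filter fun s : Fin 2 × Bool => D ((el s)⁻¹ * g) = invL s).card = 3 := by
  intro g
  have key : ∀ s, D ((el s)⁻¹ * g) = invL s ↔ D g ≠ s := by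
    intro s
    obtain ⟨N, hN⟩ := hD g
    obtain ⟨M, hM⟩ := hD ((el s)⁻¹ * g)
    have h1 := hN (max N M) (le_max_left _ _)
    have h2 := hM (max N M) (le_max_right _ _)
    rw [mul_assoc] at h2
    exact head_key _ _ _ _ h1 h2
  simp only [key]
  generalize D g = d
  have c1 : (Finset.univ.filter fun s : Fin 2 × Bool => d = s).card = 1 := by
    revert d; decide
  have c2 : (Finset.univ.filter fun s : Fin 2 × Bool => d ≠ s).card = 3 := by
    revert d; decide
  refine ⟨?_, c1, c2⟩
  rw [Finset.sum_sub_distrib, Finset.sum_boole, Finset.sum_boole, c1, c2]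
  norm_num
end
end

section
/- For the free group F₂ on two generators, the constant function 1 lies in the linear span of {g·f − f : g ∈ F₂, f ∈ ℓ∞(F₂)} inside ℓ∞(F₂); indeed there is a family (f_g)_{g ∈ F₂} of elements of ℓ∞(F₂), supported on the four generators S = {a, b, a⁻¹, b⁻¹} and with each f_s an indicator function, such that Σ_{s ∈ S} (s·f_s − f_s) is the constant function 2. (The Block–Weinberger fundamental class of F₂ vanishes.) -/
noncomputable section
open scoped ENNReal

/-- The indicator function of a set `A ⊆ G` as an element of `ℓ∞(G)`. -/
def indFn (G : Type*) (A : Set G) : Linf G :=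
  ⟨A.indicator fun _ => (1 : ℝ), memℓp_infty ⟨1, by
    rintro x ⟨h, rfl⟩
    by_cases hh : h ∈ A <;> simp [Set.indicator_apply, hh]⟩⟩

/-- Next step toward the end `a^∞`, on words. -/
def dirW (w : List (Fin 2 × Bool)) : Fin 2 × Bool :=
  if ∀ x ∈ w, x = ((0 : Fin 2), true) then (0, true) else
    match w with
    | [] => (0, true)
    | x :: _ => invL x

/-- Next step toward the end `a^∞`, on group elements. -/
def dirG (h : F2) : Fin 2 × Bool := dirW h.toWord

lemma el_eq_mk (s : Fin 2 × Bool) : el s = FreeGroup.mk [s] := by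
  rcases s with ⟨i, _ | _⟩
  · simp [el, FreeGroup.of, FreeGroup.inv_mk, FreeGroup.invRev]
  · simp [el, FreeGroup.of]

lemma el_injective : Function.Injective el := by
  intro s t h
  rw [el_eq_mk, el_eq_mk] at h
  have := congrArg FreeGroup.toWord h
  simpa [FreeGroup.toWord_mk, FreeGroup.reduce.cons] using this

lemma el_inv (s : Fin 2 × Bool) : (el s)⁻¹ = el (invL s) := by
  rcases s with ⟨i, _ | _⟩ <;> simp [el, invL]

lemma invL_invL (s : Fin 2 × Bool) : invL (invL s) = s := by simp [invL]

lemma invL_inj {s t : Fin 2 × Bool} : invL s = invL t ↔ s = t :=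
  ⟨fun h => by rw [← invL_invL s, h, invL_invL], fun h => by rw [h]⟩

lemma toWord_el_mul (t : Fin 2 × Bool) (h : F2) :
    (h.toWord = invL t :: (el t * h).toWord) ∨
      ((el t * h).toWord = t :: h.toWord) := by
  have e : el t * h = FreeGroup.mk (t :: h.toWord) := by
    conv_lhs => rw [← FreeGroup.mk_toWord (x := h), el_eq_mk, FreeGroup.mul_mk]
    rfl
  rw [e, FreeGroup.toWord_mk, FreeGroup.reduce.cons, FreeGroup.reduce_toWord]
  rcases hw : h.toWord with _ | ⟨x, w⟩
  · right; rfl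
  · by_cases hc : t.1 = x.1 ∧ t.2 = !x.2
    · left
      have : x = invL t := by
        rcases x with ⟨x1, x2⟩; rcases t with ⟨t1, t2⟩
        simp_all [invL]
      simp only [if_pos hc]
      rw [this]
    · right
      simp only [if_neg hc]

lemma dirW_nil : dirW [] = (0, true) := by simp [dirW]

lemma dirW_cons (x : Fin 2 × Bool) (w : List (Fin 2 × Bool)) :
    dirW (x :: w) = if x = (0, true) ∧ ∀ y ∈ w, y = ((0 : Fin 2), true) then (0, true)
      else invL x := by
  simp [dirW]

lemma ne_invL (t : Fin 2 × Bool) : t ≠ invL t := by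
  rcases t with ⟨i, _ | _⟩ <;> simp [invL]

/-- Key fact on words: both `w` and `t :: w` reduced. -/
lemma dirW_key (t : Fin 2 × Bool) (w : List (Fin 2 × Bool))
    (hr : FreeGroup.IsReduced (t :: w)) : dirW (t :: w) = invL t ↔ t ≠ dirW w := by
  rw [dirW_cons]
  by_cases hw : ∀ y ∈ w, y = ((0 : Fin 2), true)
  · have h1 : dirW w = (0, true) := by simp only [dirW, if_pos hw]
    rw [h1]
    by_cases ht : t = (0, true)
    · subst ht
      rw [if_pos ⟨rfl, hw⟩]
      simp [invL]
    · rw [if_neg (fun h => ht h.1)]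
      simp [ht]
  · rw [if_neg (fun h => hw h.2)]
    rcases w with _ | ⟨x, w⟩
    · simp at hw
    · have h1 : dirW (x :: w) = invL x := by simp only [dirW, if_neg hw]
      rw [h1]
      refine ⟨fun _ h => ?_, fun _ => rfl⟩
      rw [FreeGroup.isReduced_cons_cons] at hr
      have := hr.1
      subst h
      rcases x with ⟨i, _ | _⟩ <;> simp [invL] at this

lemma dirG_key (t : Fin 2 × Bool) (h : F2) : dirG (el t * h) = invL t ↔ t ≠ dirG h := by
  unfold dirG
  rcases toWord_el_mul t h with e | e
  · have hr := FreeGroup.isReduced_toWord (x := h)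
    rw [e] at hr
    have := dirW_key _ _ hr
    rw [invL_invL] at this
    rw [e]
    constructor
    · intro h1 h2
      exact this.1 h2.symm h1.symm
    · intro h1
      by_contra h2
      exact h1 (this.2 (fun h3 => h2 h3.symm)).symm
  · have hr := FreeGroup.isReduced_toWord (x := el t * h)
    rw [e] at hr ⊢
    exact dirW_key _ _ hr

/-- The family. -/
def famF (g : F2) : Linf F2 := indFn F2 {h | el (dirG h) = g}

lemma famF_sum :
    (∑ s : Fin 2 × Bool, (ltrans (el s) (famF (el s)) - famF (el s))) = (2 : ℝ) • lone F2 := by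
  classical
  apply lp.ext
  funext h
  have hs : ∀ s, (ltrans (el s) (famF (el s)) - famF (el s) : Linf F2) h
      = (if invL s ≠ dirG h then (1 : ℝ) else 0) - (if dirG h = s then 1 else 0) := by
    intro s
    have h1 : (ltrans (el s) (famF (el s)) : Linf F2) h
        = if el (dirG ((el s)⁻¹ * h)) = el s then (1 : ℝ) else 0 := by
      simp [ltrans, famF, indFn, Set.indicator_apply]
    have h2 : (famF (el s) : Linf F2) h = if el (dirG h) = el s then (1 : ℝ) else 0 := by
      simp [famF, indFn, Set.indicator_apply]
    have h3 := dirG_key (invL s) h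
    rw [invL_invL] at h3
    rw [lp.coeFn_sub, Pi.sub_apply, h1, h2, el_inv]
    simp only [el_injective.eq_iff, h3]
  rw [lp.coeFn_sum, Finset.sum_apply, Finset.sum_congr rfl (fun s _ => hs s)]
  have hl : ((2 : ℝ) • lone F2 : Linf F2) h = 2 := by
    simp [lone]
  rw [hl]
  generalize dirG h = d
  rcases d with ⟨i, b⟩
  simp only [Fintype.sum_prod_type, Fin.sum_univ_two, Fintype.sum_bool]
  fin_cases i <;> cases b <;> simp [invL] <;> norm_num

/-- For `F₂` the constant function `1` lies in the span of `{g·f − f}`: indeed there is a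
family `(f_g)` supported on the four generators `S = {a, b, a⁻¹, b⁻¹}` (as `s` ranges over
`Fin 2 × Bool`, `el s` ranges over `S`), each `f_s` an indicator function, with
`Σ_{s ∈ S} (s·f_s − f_s)` the constant function `2`.  (The Block–Weinberger fundamental
class of `F₂` vanishes.) -/
theorem blockWeinberger_class_vanishes_for_freeGroup_two :
    lone F2 ∈ Submodule.span ℝ
      {x : Linf F2 | ∃ (g : F2) (f : Linf F2), x = ltrans g f - f} ∧
    ∃ F : F2 → Linf F2,
      (∀ g : F2, (∀ s : Fin 2 × Bool, g ≠ el s) → F g = 0) ∧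
      (∀ s : Fin 2 × Bool, ∃ A : Set F2, F (el s) = indFn F2 A) ∧
      (∑ s : Fin 2 × Bool, (ltrans (el s) (F (el s)) - F (el s))) = (2 : ℝ) • lone F2 := by
  constructor
  · have h : lone F2 = (2⁻¹ : ℝ) •
        ∑ s : Fin 2 × Bool, (ltrans (el s) (famF (el s)) - famF (el s)) := by
      rw [famF_sum, smul_smul]; norm_num
    rw [h]
    exact Submodule.smul_mem _ _ (Submodule.sum_mem _ fun s _ =>
      Submodule.subset_span ⟨_, _, rfl⟩)
  · refine ⟨famF, ?_, fun s => ⟨_, rfl⟩, famF_sum⟩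
    intro g hg
    apply lp.ext
    funext h
    have : el (dirG h) ≠ g := fun e => hg _ e.symm
    simp [famF, indFn, this]
end
end
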